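/- Among all unicyclic graphs on n ≥ 4 vertices, the pineapple graph U^p_{n,3} (a triangle with n − 3 pendant vertices at one vertex) uniquely maximizes the core index, with F(U^p_{n,3}) = 7·2^{n−3} + n. -/

import Mathlib

/-!
A connected subgraph is a single vertex or is determined by its nonempty set of edges, so a graph
with `n` vertices and `n` edges satisfies `F(G) = n + 2^n - d`, where `d` counts the sets of edges
that are not connected, including `∅`. It remains to bound `d` from below.

Removing an edge `uv` of the cycle of a unicyclic graph leaves a tree, and cutting the first two
edges `ua`, `ab` of its path from `u` to `v` splits the vertices into three classes. Each of `ua`,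
`ab`, `uv` joins a different pair of classes, and every other edge lies within a class. Write `c i`
for the one of these three edges that avoids class `i`. A nonempty set `T` of other edges, one of
which lies in class `i`, becomes disconnected on adding `c i`; together with `∅` this extends each
of the `2^(n-3)` sets of other edges to a disconnected set, so `d ≥ 2^(n-3)`.

In case of equality each `T` has only one disconnected extension. Hence the three special edges
meet pairwise, all other edges lie in one class `i`, and each of them meets both `c j` with `j ≠ i`.
So all edges except `c i` pass through the common vertex of the other two special edges, and `G`
is the pineapple graph.
-/

open SimpleGraph

/-- The core index of a graph `G`: the number of connected subgraphs of `G`. -/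
noncomputable def coreIndex {V : Type*} (G : SimpleGraph V) : ℕ :=
  Nat.card {H : G.Subgraph // H.Connected}

/-- The pineapple graph `U^p_{n,g}`: the cycle `C_g` together with `n - g` pendant
vertices all attached to the cycle vertex `0`. -/
def pineapple (n g : ℕ) : SimpleGraph (Fin g ⊕ Fin (n - g)) :=
  SimpleGraph.fromRel (fun x y =>
    (∃ a b : Fin g, x = Sum.inl a ∧ y = Sum.inl b ∧ (cycleGraph g).Adj a b) ∨
    (∃ (a : Fin g) (i : Fin (n - g)), x = Sum.inl a ∧ (a : ℕ) = 0 ∧ y = Sum.inr i))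

section Subgraphs

variable {V W : Type*} {G : SimpleGraph V} {G' : SimpleGraph W}

lemma subgraph_not_connected_of_cut {H : G.Subgraph} {X : Set V}
    (closed : ∀ ⦃a b⦄, H.Adj a b → a ∈ X → b ∈ X) {u v : V} (hu : u ∈ H.verts) (huX : u ∈ X)
    (hv : v ∈ H.verts) (hvX : v ∉ X) : ¬ H.Connected := by
  intro hH
  obtain ⟨p⟩ := hH.coe.preconnected ⟨u, hu⟩ ⟨v, hv⟩
  obtain ⟨d, -, hfst, hsnd⟩ := p.exists_boundary_dart (Subtype.val ⁻¹' X) huX hvX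
  exact hsnd (closed d.adj hfst)

lemma subgraph_connected_of_forall_adj {H : G.Subgraph} {w : V} (hw : w ∈ H.verts)
    (h : ∀ v ∈ H.verts, v = w ∨ H.Adj w v ∨ ∃ x, H.Adj w x ∧ H.Adj x v) : H.Connected := by
  rw [Subgraph.connected_iff', connected_iff_exists_forall_reachable]
  refine ⟨⟨w, hw⟩, ?_⟩
  have of_adj {a b : V} (hab : H.Adj a b) :
      H.coe.Reachable ⟨a, hab.fst_mem⟩ ⟨b, hab.snd_mem⟩ := hab.coe.reachable
  rintro ⟨v, hv⟩
  obtain rfl | hwv | ⟨x, hwx, hxv⟩ := h v hv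
  exacts [.rfl, of_adj hwv, (of_adj hwx).trans (of_adj hxv)]

lemma connected_subgraph_map (f : G →g G') {H : G.Subgraph} (hH : H.Connected) :
    (H.map f).Connected := by
  let g : H.coe →g (H.map f).coe :=
    { toFun := fun v => ⟨f v, v, v.2, rfl⟩
      map_rel' := fun {a b} hab => ⟨a, b, hab, rfl, rfl⟩ }
  refine ⟨hH.coe.map g ?_⟩
  rintro ⟨_, v, hv, rfl⟩
  exact ⟨⟨v, hv⟩, rfl⟩

lemma coreIndex_congr (φ : G ≃g G') : coreIndex G = coreIndex G' :=
  Nat.card_congr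
    { toFun := fun H => ⟨H.1.map φ.toHom, connected_subgraph_map _ H.2⟩
      invFun := fun H => ⟨H.1.map φ.symm.toHom, connected_subgraph_map _ H.2⟩
      left_inv := fun H => Subtype.ext (by simp [← Subgraph.map_comp])
      right_inv := fun H => Subtype.ext (by simp [← Subgraph.map_comp]) }

variable (G) in
/-- The subgraph of `G` formed by the edges of `G` in `S` and their endpoints. -/
def subgraphOfEdges (S : Set (Sym2 V)) : G.Subgraph where
  verts := {v | ∃ w, G.Adj v w ∧ s(v, w) ∈ S}
  Adj v w := G.Adj v w ∧ s(v, w) ∈ S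
  adj_sub h := h.1
  edge_vert h := ⟨_, h⟩
  symm := ⟨fun _ _ h => ⟨h.1.symm, Sym2.eq_swap ▸ h.2⟩⟩

lemma mem_verts_subgraphOfEdges {S : Set (Sym2 V)} {v : V} {e : Sym2 V} (he : e ∈ G.edgeSet)
    (heS : e ∈ S) (hv : v ∈ e) : v ∈ (subgraphOfEdges G S).verts := by
  obtain ⟨w, rfl⟩ := hv
  exact ⟨w, he, heS⟩

lemma edgeSet_subgraphOfEdges {S : Set (Sym2 V)} (hS : S ⊆ G.edgeSet) :
    (subgraphOfEdges G S).edgeSet = S := by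
  ext ⟨v, w⟩
  exact ⟨And.right, fun h => ⟨hS h, h⟩⟩

lemma connected_subgraphOfEdges {S : Set (Sym2 V)} (hS : S ⊆ G.edgeSet) {w : V} {e : Sym2 V}
    (he : e ∈ S) (hw : w ∈ e) (h : ∀ f ∈ S, w ∈ f ∨ ∃ x ∈ f, s(w, x) ∈ S) :
    (subgraphOfEdges G S).Connected := by
  have adj {x v : V} (hxv : s(x, v) ∈ S) : (subgraphOfEdges G S).Adj x v := ⟨hS hxv, hxv⟩
  refine subgraph_connected_of_forall_adj (mem_verts_subgraphOfEdges (hS he) he hw) ?_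
  rintro v ⟨u, -, huv⟩
  refine or_iff_not_imp_left.2 fun hvw => ?_
  obtain hwf | ⟨x, hx, hwx⟩ := h _ huv
  · obtain rfl : w = u := (Sym2.mem_iff.1 hwf).resolve_left (Ne.symm hvw)
    exact .inl (adj huv).symm
  · obtain rfl | rfl := Sym2.mem_iff.1 hx
    · exact .inl (adj hwx)
    · exact .inr ⟨x, adj hwx, (adj huv).symm⟩

lemma injOn_subgraphOfEdges : Set.InjOn (subgraphOfEdges G) (𝒫 G.edgeSet) := fun S hS T hT h => by
  rw [← edgeSet_subgraphOfEdges hS, h, edgeSet_subgraphOfEdges hT]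

lemma eq_singletonSubgraph_or_eq_subgraphOfEdges {H : G.Subgraph} (hH : H.Connected) :
    (∃ v, H = G.singletonSubgraph v) ∨ H = subgraphOfEdges G H.edgeSet := by
  obtain hsub | hnon := H.verts.subsingleton_or_nontrivial
  · obtain ⟨v, hv⟩ := hH.nonempty
    have hverts : H.verts = {v} := hsub.eq_singleton_of_mem hv
    refine .inl ⟨v, Subgraph.ext hverts ?_⟩
    ext a b
    exact iff_of_false (fun hab => hab.ne (hsub hab.fst_mem hab.snd_mem)) id
  · have : Nontrivial H.verts := hnon.coe_sort
    refine .inr (Subgraph.ext ?_ ?_)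
    · ext v
      constructor
      · intro hv
        obtain ⟨w, hvw⟩ := hH.preconnected.exists_adj_of_nontrivial ⟨v, hv⟩
        exact ⟨w, hvw.adj_sub, hvw⟩
      · rintro ⟨w, -, hvw⟩
        exact Subgraph.Adj.fst_mem hvw
    · ext a b
      exact ⟨fun h => ⟨h.adj_sub, h⟩, And.right⟩

lemma singletonSubgraph_injective : Function.Injective G.singletonSubgraph := fun _ _ h =>
  Set.singleton_injective (congrArg Subgraph.verts h)

variable (G) in
/-- The sets of edges of `G` that do not form a connected subgraph together with their endpoints.
The empty set counts as disconnected. -/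
def disconnectedEdgeSets : Set (Set (Sym2 V)) :=
  {S | S ⊆ G.edgeSet ∧ ¬ (subgraphOfEdges G S).Connected}

lemma setOf_connected_eq_union : {H : G.Subgraph | H.Connected} =
    Set.range G.singletonSubgraph ∪
      subgraphOfEdges G '' (𝒫 G.edgeSet \ disconnectedEdgeSets G) := by
  ext H
  constructor
  · intro hH
    obtain ⟨v, rfl⟩ | hEdges := eq_singletonSubgraph_or_eq_subgraphOfEdges hH
    · exact .inl ⟨v, rfl⟩
    · exact .inr ⟨H.edgeSet, ⟨H.edgeSet_subset, fun hd => hd.2 (hEdges ▸ hH)⟩, hEdges.symm⟩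
  · rintro (⟨v, rfl⟩ | ⟨S, ⟨hS, hd⟩, rfl⟩)
    · exact Subgraph.singletonSubgraph_connected
    · exact not_not.1 fun h => hd ⟨hS, h⟩

lemma disjoint_singletonSubgraph_subgraphOfEdges (𝒮 : Set (Set (Sym2 V))) :
    Disjoint (Set.range G.singletonSubgraph) (subgraphOfEdges G '' 𝒮) := by
  rw [Set.disjoint_left]
  rintro _ ⟨v, rfl⟩ ⟨S, -, hS⟩
  obtain ⟨w, hvw⟩ : v ∈ (subgraphOfEdges G S).verts := hS ▸ Set.mem_singleton v
  have : (G.singletonSubgraph v).Adj v w := hS ▸ hvw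
  exact this

lemma coreIndex_add_ncard_disconnectedEdgeSets [Finite V] :
    coreIndex G + (disconnectedEdgeSets G).ncard = Nat.card V + 2 ^ G.edgeSet.ncard := by
  have hpow : disconnectedEdgeSets G ⊆ 𝒫 G.edgeSet := fun S hS => hS.1
  calc coreIndex G + (disconnectedEdgeSets G).ncard
      = Nat.card V + (𝒫 G.edgeSet \ disconnectedEdgeSets G).ncard
          + (disconnectedEdgeSets G).ncard := by
        rw [coreIndex, ← Set.coe_ofPred, Nat.card_coe_set_eq, setOf_connected_eq_union,
          Set.ncard_union_eq (disjoint_singletonSubgraph_subgraphOfEdges _),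
          Set.ncard_range_of_injective singletonSubgraph_injective,
          (injOn_subgraphOfEdges.mono Set.sdiff_subset).ncard_image]
    _ = Nat.card V + 2 ^ G.edgeSet.ncard := by
        rw [add_assoc, Set.ncard_sdiff_add_ncard_of_subset hpow, Set.ncard_powerset]

lemma empty_mem_disconnectedEdgeSets : ∅ ∈ disconnectedEdgeSets G := by
  refine ⟨Set.empty_subset _, fun h => ?_⟩
  obtain ⟨v, w, -, hvw⟩ := h.nonempty
  exact hvw

lemma pair_mem_disconnectedEdgeSets {e f : Sym2 V} (he : e ∈ G.edgeSet) (hf : f ∈ G.edgeSet)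
    (hef : ∀ x ∈ e, x ∉ f) : {e, f} ∈ disconnectedEdgeSets G := by
  refine ⟨Set.pair_subset he hf, ?_⟩
  refine subgraph_not_connected_of_cut (X := {x | x ∈ e}) (fun a b ⟨_, hab⟩ ha => ?_)
    (mem_verts_subgraphOfEdges he (.inl rfl) e.out_fst_mem) e.out_fst_mem
    (mem_verts_subgraphOfEdges hf (.inr rfl) f.out_fst_mem) fun h => hef _ h f.out_fst_mem
  obtain rfl | rfl := hab
  · exact Sym2.mem_mk_right a b
  · exact absurd (Sym2.mem_mk_left a b) (hef a ha)

end Subgraphs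

section TriangleContraction

variable {V : Type*} {G : SimpleGraph V}

/-- `ρ` contracts `G` onto a triangle with vertices `Fin 3`: the edge `c i` of `G` is the only one
mapped to the side of the triangle opposite `i`, and every edge not of the form `c i` collapses to
a vertex. -/
structure IsTriangleContraction (G : SimpleGraph V) (ρ : V → Fin 3) (c : Fin 3 → Sym2 V) :
    Prop where
  mem_edgeSet (i : Fin 3) : c i ∈ G.edgeSet
  map_eq (i : Fin 3) : (c i).map ρ = s(i + 1, i + 2)
  isDiag_map {e : Sym2 V} : e ∈ G.edgeSet → e ∉ Set.range c → (e.map ρ).IsDiag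

namespace IsTriangleContraction

variable {ρ : V → Fin 3} {c : Fin 3 → Sym2 V}

lemma injective (hc : IsTriangleContraction G ρ c) : Function.Injective c := fun i j hij => by
  have sides_injective : ∀ i j : Fin 3, s(i + 1, i + 2) = s(j + 1, j + 2) → i = j := by decide
  exact sides_injective i j (by rw [← hc.map_eq, ← hc.map_eq, hij])

lemma ncard_range (hc : IsTriangleContraction G ρ c) : (Set.range c).ncard = 3 := by
  rw [Set.ncard_range_of_injective hc.injective, Nat.card_fin]

lemma range_subset (hc : IsTriangleContraction G ρ c) : Set.range c ⊆ G.edgeSet :=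
  Set.range_subset_iff.2 hc.mem_edgeSet

lemma apply_ne_of_mem (hc : IsTriangleContraction G ρ c) {i : Fin 3} {x : V} (hx : x ∈ c i) :
    ρ x ≠ i := by
  have notMem_side : ∀ i : Fin 3, i ∉ s(i + 1, i + 2) := by decide
  rintro rfl
  exact notMem_side (ρ x) (hc.map_eq (ρ x) ▸ Sym2.mem_map.2 ⟨x, hx, rfl⟩)

lemma eq_of_mem_of_apply_eq (hc : IsTriangleContraction G ρ c) {i : Fin 3} {x y : V}
    (hx : x ∈ c i) (hy : y ∈ c i) (hxy : ρ x = ρ y) : x = y := by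
  by_contra hne
  have side_ne_diag : ∀ i j : Fin 3, s(j, j) ≠ s(i + 1, i + 2) := by decide
  have h := hc.map_eq i
  rw [(Sym2.mem_and_mem_iff hne).1 ⟨hx, hy⟩, Sym2.map_mk, hxy] at h
  exact side_ne_diag i (ρ y) h

lemma exists_forall_apply_eq (hc : IsTriangleContraction G ρ c) {e : Sym2 V}
    (he : e ∈ G.edgeSet \ Set.range c) : ∃ i, ∀ x ∈ e, ρ x = i := by
  have h := hc.isDiag_map he.1 he.2
  induction e with | _ a b
  exact ⟨ρ a, Sym2.forall_mem_pair.2 ⟨rfl, Eq.symm h⟩⟩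

/-- No edge of `insert (c i) T` leaves the class `ρ ⁻¹' {i}`, which contains `e` but not `c i`. -/
lemma insert_mem_disconnectedEdgeSets (hc : IsTriangleContraction G ρ c) {T : Set (Sym2 V)}
    (hT : T ⊆ G.edgeSet \ Set.range c) {e : Sym2 V} (he : e ∈ T) {i : Fin 3}
    (hei : ∀ x ∈ e, ρ x = i) : insert (c i) T ∈ disconnectedEdgeSets G := by
  refine ⟨Set.insert_subset (hc.mem_edgeSet i) (hT.trans Set.sdiff_subset), ?_⟩
  refine subgraph_not_connected_of_cut (X := ρ ⁻¹' {i}) (fun a b ⟨_, hab⟩ ha => ?_)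
    (mem_verts_subgraphOfEdges (hT he).1 (.inr he) e.out_fst_mem) (hei _ e.out_fst_mem)
    (mem_verts_subgraphOfEdges (hc.mem_edgeSet i) (.inl rfl) (c i).out_fst_mem)
    (hc.apply_ne_of_mem (c i).out_fst_mem)
  obtain hab | hab := hab
  · exact absurd ha (hc.apply_ne_of_mem (hab ▸ Sym2.mem_mk_left a b))
  · exact (Eq.symm (hc.isDiag_map (hT hab).1 (hT hab).2)).trans ha

lemma image_sdiff_disconnectedEdgeSets (hc : IsTriangleContraction G ρ c) :
    (· \ Set.range c) '' disconnectedEdgeSets G = 𝒫 (G.edgeSet \ Set.range c) := by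
  refine Set.Subset.antisymm ?_ fun T hT => ?_
  · rintro _ ⟨S, hS, rfl⟩
    exact Set.sdiff_subset_sdiff_left hS.1
  have hdisj : T \ Set.range c = T :=
    (Set.disjoint_of_subset_left hT Set.disjoint_sdiff_left).sdiff_eq_left
  obtain rfl | ⟨e, he⟩ := T.eq_empty_or_nonempty
  · exact ⟨∅, empty_mem_disconnectedEdgeSets, hdisj⟩
  · obtain ⟨i, hei⟩ := hc.exists_forall_apply_eq (hT he)
    refine ⟨insert (c i) T, hc.insert_mem_disconnectedEdgeSets hT he hei, ?_⟩
    exact (Set.insert_sdiff_of_mem T (Set.mem_range_self i)).trans hdisj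

lemma ncard_image_sdiff_disconnectedEdgeSets [Finite V] (hc : IsTriangleContraction G ρ c) :
    ((· \ Set.range c) '' disconnectedEdgeSets G).ncard = 2 ^ (G.edgeSet.ncard - 3) := by
  rw [hc.image_sdiff_disconnectedEdgeSets, Set.ncard_powerset, Set.ncard_sdiff hc.range_subset,
    hc.ncard_range]

lemma two_pow_ncard_edgeSet [Finite V] (hc : IsTriangleContraction G ρ c) :
    2 ^ G.edgeSet.ncard = 8 * 2 ^ (G.edgeSet.ncard - 3) := by
  have hthree : 3 ≤ G.edgeSet.ncard := hc.ncard_range ▸ Set.ncard_le_ncard hc.range_subset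
  rw [← pow_mul_pow_sub 2 hthree]
  rfl

lemma coreIndex_le [Finite V] (hc : IsTriangleContraction G ρ c) :
    coreIndex G ≤ 7 * 2 ^ (G.edgeSet.ncard - 3) + Nat.card V := by
  have hsum := coreIndex_add_ncard_disconnectedEdgeSets (G := G)
  have hdisc : 2 ^ (G.edgeSet.ncard - 3) ≤ (disconnectedEdgeSets G).ncard :=
    hc.ncard_image_sdiff_disconnectedEdgeSets ▸ Set.ncard_image_le
  rw [hc.two_pow_ncard_edgeSet] at hsum
  omega

lemma coreIndex_eq_iff_injOn [Finite V] (hc : IsTriangleContraction G ρ c) :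
    coreIndex G = 7 * 2 ^ (G.edgeSet.ncard - 3) + Nat.card V ↔
      Set.InjOn (· \ Set.range c) (disconnectedEdgeSets G) := by
  have hsum := coreIndex_add_ncard_disconnectedEdgeSets (G := G)
  rw [hc.two_pow_ncard_edgeSet] at hsum
  rw [← Set.ncard_image_iff, hc.ncard_image_sdiff_disconnectedEdgeSets]
  omega

section InjOn

variable (hc : IsTriangleContraction G ρ c)
  (hinj : Set.InjOn (· \ Set.range c) (disconnectedEdgeSets G))
include hc hinj

/-- Otherwise `{e, f}` could be completed to a disconnected set by `c i` as well as by `c j`. -/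
lemma eq_of_forall_apply_eq_of_injOn {e f : Sym2 V} {i j : Fin 3}
    (he : e ∈ G.edgeSet \ Set.range c) (hf : f ∈ G.edgeSet \ Set.range c)
    (hei : ∀ x ∈ e, ρ x = i) (hfj : ∀ x ∈ f, ρ x = j) : i = j := by
  have hef : ({e, f} : Set (Sym2 V)) ⊆ G.edgeSet \ Set.range c := Set.pair_subset he hf
  have h : insert (c i) {e, f} = insert (c j) ({e, f} : Set (Sym2 V)) := by
    refine hinj (hc.insert_mem_disconnectedEdgeSets hef (.inl rfl) hei)
      (hc.insert_mem_disconnectedEdgeSets hef (.inr rfl) hfj) ?_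
    simp only [Set.insert_sdiff_of_mem _ (Set.mem_range_self _)]
  obtain hij | hmem : c i ∈ insert (c j) ({e, f} : Set (Sym2 V)) := h ▸ Set.mem_insert _ _
  · exact hc.injective hij
  · exact absurd (Set.mem_range_self i) (hef hmem).2

/-- Otherwise `{c i, c j}` and `∅` are disconnected sets that agree off the range of `c`. -/
lemma exists_mem_and_mem_of_injOn (i j : Fin 3) : ∃ x ∈ c i, x ∈ c j := by
  by_contra! hij
  have h : {c i, c j} = (∅ : Set (Sym2 V)) := by
    refine hinj (pair_mem_disconnectedEdgeSets (hc.mem_edgeSet i) (hc.mem_edgeSet j) hij)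
      empty_mem_disconnectedEdgeSets ?_
    simp only [Set.insert_sdiff_of_mem _ (Set.mem_range_self _), Set.empty_sdiff,
      Set.sdiff_eq_empty, Set.singleton_subset_iff, Set.mem_range_self]
  exact (Set.insert_nonempty _ _).ne_empty h

/-- Otherwise `{e, c i}` and `{e, c j}` are disconnected sets that agree off the range of `c`. -/
lemma exists_mem_and_mem_of_forall_apply_eq_of_injOn {e : Sym2 V} {i j : Fin 3}
    (he : e ∈ G.edgeSet \ Set.range c) (hei : ∀ x ∈ e, ρ x = i) (hij : i ≠ j) :
    ∃ x ∈ c j, x ∈ e := by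
  by_contra! hje
  have h : {c i, e} = ({c j, e} : Set (Sym2 V)) := by
    refine hinj (hc.insert_mem_disconnectedEdgeSets (Set.singleton_subset_iff.2 he) rfl hei)
      (pair_mem_disconnectedEdgeSets (hc.mem_edgeSet j) he.1 hje) ?_
    simp only [Set.insert_sdiff_of_mem _ (Set.mem_range_self _)]
  obtain hcij | hcie : c i ∈ ({c j, e} : Set (Sym2 V)) := h ▸ Set.mem_insert _ _
  · exact hij (hc.injective hcij)
  · exact he.2 ⟨i, hcie⟩

lemma exists_forall_mem_of_injOn : ∃ i, ∃ w ∉ c i, ∀ e ∈ G.edgeSet, e ≠ c i → w ∈ e := by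
  obtain ⟨i, hi⟩ : ∃ i, ∀ e ∈ G.edgeSet \ Set.range c, ∀ x ∈ e, ρ x = i := by
    obtain hempty | ⟨f, hf⟩ := (G.edgeSet \ Set.range c).eq_empty_or_nonempty
    · simp [hempty]
    · obtain ⟨i, hfi⟩ := hc.exists_forall_apply_eq hf
      refine ⟨i, fun e he => ?_⟩
      obtain ⟨j, hej⟩ := hc.exists_forall_apply_eq he
      rwa [hc.eq_of_forall_apply_eq_of_injOn hinj hf he hfi hej]
  obtain ⟨w, hw₁, hw₂⟩ := hc.exists_mem_and_mem_of_injOn hinj (i + 1) (i + 2)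
  have eq_or_eq_of_ne : ∀ i j : Fin 3, j ≠ i → j = i + 1 ∨ j = i + 2 := by decide
  have hρw : ρ w = i := by
    by_contra hne
    exact (eq_or_eq_of_ne i _ hne).elim (hc.apply_ne_of_mem hw₁) (hc.apply_ne_of_mem hw₂)
  refine ⟨i, w, fun hw => hc.apply_ne_of_mem hw hρw, fun e he hne => ?_⟩
  by_cases heT : e ∈ Set.range c
  · obtain ⟨j, rfl⟩ := heT
    obtain rfl | rfl := eq_or_eq_of_ne i j (ne_of_apply_ne c hne)
    exacts [hw₁, hw₂]
  · have hei := hi e ⟨he, heT⟩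
    obtain ⟨x, hx, hxe⟩ :=
      hc.exists_mem_and_mem_of_forall_apply_eq_of_injOn hinj ⟨he, heT⟩ hei (j := i + 1) (by simp)
    rwa [hc.eq_of_mem_of_apply_eq hw₁ hx (hρw.trans (hei x hxe).symm)]

end InjOn

end IsTriangleContraction

end TriangleContraction

section Unicyclic

variable {V : Type*} {G : SimpleGraph V}

lemma reachable_deleteEdges_singleton_congr {u x y : V} {e : Sym2 V} (hxy : G.Adj x y)
    (hne : s(x, y) ≠ e) :
    (G.deleteEdges {e}).Reachable u x ↔ (G.deleteEdges {e}).Reachable u y := by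
  have h : (G.deleteEdges {e}).Reachable x y := (deleteEdges_adj.2 ⟨hxy, hne⟩).reachable
  exact ⟨fun hx => hx.trans h, fun hy => hy.trans h.symm⟩

lemma reachable_deleteEdges_of_notMem_support {u w x y : V} {p : G.Walk x y}
    (hu : u ∉ p.support) : (G.deleteEdges {s(u, w)}).Reachable x y :=
  reachable_deleteEdges_iff_exists_walk.2
    ⟨p, fun h => hu (p.fst_mem_support_of_mem_edges h)⟩

open Classical in
lemma isTriangleContraction_of_cuts {X Y : Set V} {u v a b : V} (hab : G.Adj a b)
    (hvu : G.Adj v u) (hua : G.Adj u a) (huX : u ∈ X) (haX : a ∉ X) (hbX : b ∉ X) (hvX : v ∉ X)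
    (haY : a ∉ Y) (hbY : b ∈ Y) (hvY : v ∈ Y)
    (h : ∀ ⦃x y⦄, G.Adj x y → s(x, y) ≠ s(a, b) → s(x, y) ≠ s(v, u) → s(x, y) ≠ s(u, a) →
      (x ∈ X ↔ y ∈ X) ∧ (x ∈ Y ↔ y ∈ Y)) :
    IsTriangleContraction G (fun x => if x ∈ X then 0 else if x ∈ Y then 2 else 1)
      ![s(a, b), s(v, u), s(u, a)] where
  mem_edgeSet := Fin.forall_fin_succ.2 ⟨hab, Fin.forall_fin_two.2 ⟨hvu, hua⟩⟩
  map_eq i := by fin_cases i <;> simp [huX, haX, hbX, hvX, haY, hbY, hvY]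
  isDiag_map {e} he hrange := by
    simp only [Set.mem_range, not_exists, Fin.forall_fin_succ] at hrange
    induction e with | _ x y
    obtain ⟨hX, hY⟩ := h he (Ne.symm hrange.1) (Ne.symm hrange.2.1) (Ne.symm hrange.2.2.1)
    simp [hX, hY]

/-- The vertices of the triangle are the three parts into which removing the first two edges of
the path from `u` to `v` splits its component. -/
lemma exists_isTriangleContraction_sup_edge (hG : G.IsAcyclic) {u v : V}
    (hreach : G.Reachable u v) (huv : u ≠ v) (hadj : ¬ G.Adj u v) :
    ∃ ρ c, IsTriangleContraction (G ⊔ edge u v) ρ c := by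
  rw [isAcyclic_iff_forall_adj_isBridge] at hG
  obtain ⟨p, hp⟩ := hreach.exists_isPath
  obtain _ | @⟨_, a, _, hua, _ | @⟨_, b, _, hab, r⟩⟩ := p
  · exact absurd rfl huv
  · exact absurd hua hadj
  rw [Walk.cons_isPath_iff, Walk.cons_isPath_iff] at hp
  obtain ⟨⟨-, ha⟩, hu⟩ := hp
  let X := {x | (G.deleteEdges {s(u, a)}).Reachable u x}
  let Y := {x | (G.deleteEdges {s(a, b)}).Reachable b x}
  have haX : a ∉ X := hG hua
  have hub : u ≠ b := by
    rintro rfl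
    simp at hu
  have hbX : b ∉ X := fun hb =>
    haX ((reachable_deleteEdges_singleton_congr hab (by simp [hua.ne', hub.symm])).2 hb)
  have hvX : v ∉ X := fun hv => haX <| hv.trans (reachable_deleteEdges_of_notMem_support hu).symm
  have haY : a ∉ Y := fun h => hG hab h.symm
  have hvY : v ∈ Y := reachable_deleteEdges_of_notMem_support ha
  refine ⟨_, _, isTriangleContraction_of_cuts (X := X) (Y := Y) (a := a) (b := b) (.inl hab)
    (.inr ?_) (.inl hua) .rfl haX hbX hvX haY .rfl hvY ?_⟩
  · simp [edge_adj, huv.symm]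
  · rintro x y (hxy | hxy) hab' hvu' hua'
    · exact ⟨reachable_deleteEdges_singleton_congr hxy hua',
        reachable_deleteEdges_singleton_congr hxy hab'⟩
    · exact absurd ((adj_edge u v).1 hxy).1 (Sym2.eq_swap ▸ hvu'.symm)

lemma exists_isTriangleContraction [Finite V] (hG : G.Connected)
    (hcard : G.edgeSet.ncard = Nat.card V) : ∃ ρ c, IsTriangleContraction G ρ c := by
  have hcyclic : ¬ G.IsAcyclic := fun h => by
    have := (isTree_iff_connected_and_card.1 ⟨hG, h⟩).2
    rw [Nat.card_coe_set_eq] at this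
    omega
  rw [isAcyclic_iff_forall_adj_isBridge] at hcyclic
  push Not at hcyclic
  obtain ⟨u, v, huv, hbridge⟩ := hcyclic
  have hT : (G.deleteEdges {s(u, v)}).IsTree := by
    refine isTree_iff_connected_and_card.2 ⟨hG.connected_delete_edge_of_not_isBridge hbridge, ?_⟩
    rw [edgeSet_deleteEdges, Nat.card_coe_set_eq,
      Set.ncard_sdiff_singleton_add_one (G.mem_edgeSet.2 huv), hcard]
  have hsup : G.deleteEdges {s(u, v)} ⊔ edge u v = G :=
    sdiff_sup_cancel ((edge_le_iff G).2 (.inr huv))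
  rw [← hsup]
  exact exists_isTriangleContraction_sup_edge hT.isAcyclic (hT.connected u v) huv.ne (by simp)

end Unicyclic

section TrianglePineapple

variable {V : Type*}

/-- The pineapple graph on `V`: the triangle `t` together with an edge from `t 0` to every vertex
outside it. -/
def trianglePineapple (t : Fin 3 ↪ V) : SimpleGraph V :=
  starGraph (t 0) ⊔ edge (t 1) (t 2)

/-- The side of the triangle `t` opposite `t i`. -/
def triangleSide (t : Fin 3 ↪ V) (i : Fin 3) : Sym2 V := s(t (i + 1), t (i + 2))

variable {t : Fin 3 ↪ V}

lemma mem_triangleSide_iff {i j : Fin 3} : t i ∈ triangleSide t j ↔ i ≠ j := by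
  simp only [triangleSide, Sym2.mem_iff, t.injective.eq_iff]
  revert i j
  decide

lemma mem_edgeSet_trianglePineapple {e : Sym2 V} : e ∈ (trianglePineapple t).edgeSet ↔
    e = triangleSide t 0 ∨ t 0 ∈ e ∧ ¬ e.IsDiag := by
  have h : triangleSide t 0 = s(t 1, t 2) := rfl
  have hne : t 1 ≠ t 2 := t.injective.ne (by decide)
  induction e with | _ x y
  simp only [h, trianglePineapple, mem_edgeSet, sup_adj, starGraph_adj, edge_adj, Sym2.mem_iff,
    Sym2.mk_isDiag_iff, Sym2.eq_iff]
  grind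

lemma ncard_edgeSet_trianglePineapple [Finite V] :
    (trianglePineapple t).edgeSet.ncard = Nat.card V := by
  have hstar := (isTree_iff_connected_and_card.1 (isTree_starGraph (t 0))).2
  have hnotMem : s(t 1, t 2) ∉ (starGraph (t 0)).edgeSet := by
    simp [starGraph_adj]
  rw [trianglePineapple, edgeSet_sup, edgeSet_edge_of_ne (t.injective.ne (by decide)),
    Set.union_singleton, Set.ncard_insert_of_notMem hnotMem, ← Nat.card_coe_set_eq, hstar]

/-- The vertices outside the triangle collapse to its vertex `t 0`. -/
lemma isTriangleContraction_trianglePineapple :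
    IsTriangleContraction (trianglePineapple t) (Function.extend t id 0) (triangleSide t) where
  mem_edgeSet i := by
    rw [mem_edgeSet_trianglePineapple, mem_triangleSide_iff]
    fin_cases i <;> simp [triangleSide]
  map_eq i := by simp [triangleSide, t.injective.extend_apply]
  isDiag_map {e} he hrange := by
    obtain rfl | ⟨⟨x, rfl⟩, hdiag⟩ := mem_edgeSet_trianglePineapple.1 he
    · exact absurd ⟨0, rfl⟩ hrange
    · have hx : ¬ ∃ i, t i = x := by
        rintro ⟨i, rfl⟩
        fin_cases i
        exacts [hdiag rfl, hrange ⟨2, rfl⟩, hrange ⟨1, Sym2.eq_swap⟩]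
      simp [t.injective.extend_apply, Function.extend_apply' _ _ _ hx]

lemma triangleSide_mem_iff_of_mem_disconnectedEdgeSets {S : Set (Sym2 V)}
    (hS : S ∈ disconnectedEdgeSets (trianglePineapple t)) (hne : S.Nonempty) {j : Fin 3} :
    triangleSide t j ∈ S ↔ j = 0 := by
  obtain ⟨hSG, hdisc⟩ := hS
  have hstar {e : Sym2 V} (he : e ∈ S) (h0 : e ≠ triangleSide t 0) : t 0 ∈ e :=
    ((mem_edgeSet_trianglePineapple.1 (hSG he)).resolve_left h0).1
  have h0 : triangleSide t 0 ∈ S := by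
    by_contra h0
    obtain ⟨e, he⟩ := hne
    have hstar' {e : Sym2 V} (he : e ∈ S) : t 0 ∈ e := hstar he (ne_of_mem_of_not_mem he h0)
    exact hdisc (connected_subgraphOfEdges hSG he (hstar' he) fun f hf => .inl (hstar' hf))
  refine ⟨fun hj => by_contra fun hj0 => ?_, fun hj => hj ▸ h0⟩
  refine hdisc (connected_subgraphOfEdges hSG hj (mem_triangleSide_iff.2 (Ne.symm hj0)) ?_)
  refine fun e he => or_iff_not_imp_left.2 fun h0e => ?_
  obtain rfl : e = triangleSide t 0 := by_contra fun h => h0e (hstar he h)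
  obtain rfl | rfl : j = 1 ∨ j = 2 := by omega
  · exact ⟨t 2, mem_triangleSide_iff.2 (by decide), Sym2.eq_swap ▸ hj⟩
  · exact ⟨t 1, mem_triangleSide_iff.2 (by decide), hj⟩

lemma eq_empty_or_of_mem_disconnectedEdgeSets_trianglePineapple {S : Set (Sym2 V)}
    (hS : S ∈ disconnectedEdgeSets (trianglePineapple t)) :
    S = ∅ ∨ (S \ Set.range (triangleSide t)).Nonempty ∧
      S = insert (triangleSide t 0) (S \ Set.range (triangleSide t)) := by
  obtain rfl | hne := S.eq_empty_or_nonempty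
  · exact .inl rfl
  have hside {j : Fin 3} := triangleSide_mem_iff_of_mem_disconnectedEdgeSets hS hne (j := j)
  have h0 : triangleSide t 0 ∈ S := hside.2 rfl
  have hSeq : S = insert (triangleSide t 0) (S \ Set.range (triangleSide t)) := by
    refine Set.Subset.antisymm (fun e he => or_iff_not_imp_right.2 fun hmem => ?_)
      (Set.insert_subset h0 Set.sdiff_subset)
    obtain ⟨j, rfl⟩ : e ∈ Set.range (triangleSide t) := not_not.1 fun h => hmem ⟨he, h⟩
    rw [hside.1 he]
  refine .inr ⟨Set.nonempty_iff_ne_empty.2 fun hempty => ?_, hSeq⟩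
  rw [hempty] at hSeq
  have h1 : t 1 ∈ triangleSide t 0 := mem_triangleSide_iff.2 (by decide)
  refine hS.2 (connected_subgraphOfEdges hS.1 h0 h1 fun e he => .inl ?_)
  obtain rfl : e = triangleSide t 0 := by simpa [hSeq] using he
  exact h1

lemma injOn_sdiff_disconnectedEdgeSets_trianglePineapple :
    Set.InjOn (· \ Set.range (triangleSide t)) (disconnectedEdgeSets (trianglePineapple t)) := by
  intro S hS S' hS' (h : S \ _ = S' \ _)
  obtain rfl | ⟨hne, hSeq⟩ := eq_empty_or_of_mem_disconnectedEdgeSets_trianglePineapple hS <;>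
    obtain rfl | ⟨hne', hSeq'⟩ := eq_empty_or_of_mem_disconnectedEdgeSets_trianglePineapple hS'
  · rfl
  · exact absurd (h.symm.trans (Set.empty_sdiff _)) hne'.ne_empty
  · exact absurd (h.trans (Set.empty_sdiff _)) hne.ne_empty
  · rw [hSeq, h, ← hSeq']

lemma coreIndex_trianglePineapple [Finite V] (t : Fin 3 ↪ V) :
    coreIndex (trianglePineapple t) = 7 * 2 ^ (Nat.card V - 3) + Nat.card V := by
  have h := isTriangleContraction_trianglePineapple.coreIndex_eq_iff_injOn.2
    (injOn_sdiff_disconnectedEdgeSets_trianglePineapple (t := t))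
  rwa [ncard_edgeSet_trianglePineapple] at h

lemma nonempty_iso_trianglePineapple {W : Type*} [Finite V] [Finite W]
    (hcard : Nat.card V = Nat.card W) (t : Fin 3 ↪ V) (t' : Fin 3 ↪ W) :
    Nonempty (trianglePineapple t ≃g trianglePineapple t') := by
  obtain ⟨φ⟩ := Finite.card_eq.1 hcard
  obtain ⟨σ, hσ⟩ := Equiv.Perm.exists_extending_pair (φ ∘ t) t' (φ.injective.comp t.injective)
    t'.injective
  let ψ := φ.trans σ
  have hψ (i : Fin 3) : ψ (t i) = t' i := hσ i
  refine ⟨ψ, ?_⟩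
  intro x y
  simp only [trianglePineapple, sup_adj, starGraph_adj, edge_adj, ← hψ, ψ.injective.eq_iff,
    ψ.injective.ne_iff]

lemma exists_eq_trianglePineapple [Finite V] {G : SimpleGraph V}
    (hcard : G.edgeSet.ncard = Nat.card V) {c : Sym2 V} (hcG : c ∈ G.edgeSet) {w : V}
    (hwc : w ∉ c) (h : ∀ e ∈ G.edgeSet, e ≠ c → w ∈ e) : ∃ t, G = trianglePineapple t := by
  induction c with | _ x y
  rw [Sym2.mem_iff, not_or] at hwc
  let t : Fin 3 ↪ V := ⟨![w, x, y], by
    have hxy : x ≠ y := G.ne_of_adj hcG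
    intro i j hij
    fin_cases i <;> fin_cases j <;> simp_all⟩
  refine ⟨t, edgeSet_injective (Set.eq_of_subset_of_ncard_le (fun e he => ?_) ?_)⟩
  · exact mem_edgeSet_trianglePineapple.2 <| or_iff_not_imp_left.2 fun hne =>
      ⟨h e he hne, G.not_isDiag_of_mem_edgeSet he⟩
  · rw [hcard, ncard_edgeSet_trianglePineapple]

end TrianglePineapple

lemma pineapple_three_eq_trianglePineapple (n : ℕ) :
    pineapple n 3 = trianglePineapple Function.Embedding.inl := by
  ext (a | i) (b | j)
  · simp only [pineapple, cycleGraph_three_eq_top, top_adj, ne_eq, exists_and_left,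
      Fin.val_eq_zero_iff, ↓existsAndEq, true_and, fromRel_adj, Sum.inl.injEq, exists_eq_left',
      reduceCtorEq, exists_false, and_false, or_false, trianglePineapple,
      Function.Embedding.inl_apply, sup_adj, starGraph_adj, edge_adj]
    revert a b
    decide
  all_goals simp [pineapple, trianglePineapple, starGraph_adj, edge_adj]

section Extremal

variable {V : Type*} [Finite V] {G : SimpleGraph V}

lemma coreIndex_le_of_connected (hG : G.Connected) (hcard : G.edgeSet.ncard = Nat.card V) :
    coreIndex G ≤ 7 * 2 ^ (Nat.card V - 3) + Nat.card V := by
  obtain ⟨ρ, c, hc⟩ := exists_isTriangleContraction hG hcard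
  exact hcard ▸ hc.coreIndex_le

lemma exists_eq_trianglePineapple_of_coreIndex_eq (hG : G.Connected)
    (hcard : G.edgeSet.ncard = Nat.card V)
    (h : coreIndex G = 7 * 2 ^ (Nat.card V - 3) + Nat.card V) : ∃ t, G = trianglePineapple t := by
  obtain ⟨ρ, c, hc⟩ := exists_isTriangleContraction hG hcard
  have hinj := hc.coreIndex_eq_iff_injOn.1 (by rw [h, hcard])
  obtain ⟨i, w, hw, hstar⟩ := hc.exists_forall_mem_of_injOn hinj
  exact exists_eq_trianglePineapple hcard (hc.mem_edgeSet i) hw hstar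

end Extremal

/-- Among all unicyclic graphs on `n ≥ 4` vertices, the pineapple graph `U^p_{n,3}`
uniquely maximizes the core index, with `F(U^p_{n,3}) = 7·2^(n-3) + n`. -/
theorem pineapple_three_maximizes_coreIndex (n : ℕ) (hn : 4 ≤ n) :
    (∀ {V : Type} [Fintype V] (G : SimpleGraph V), Fintype.card V = n →
      G.Connected → Nat.card G.edgeSet = n →
      (coreIndex G ≤ coreIndex (pineapple n 3) ∧
        (coreIndex G = coreIndex (pineapple n 3) ↔ Nonempty (G ≃g pineapple n 3)))) ∧
    coreIndex (pineapple n 3) = 7 * 2 ^ (n - 3) + n := by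
  have hcardP : Nat.card (Fin 3 ⊕ Fin (n - 3)) = n := by
    rw [Nat.card_sum, Nat.card_fin, Nat.card_fin]
    omega
  have hP : coreIndex (pineapple n 3) = 7 * 2 ^ (n - 3) + n := by
    rw [pineapple_three_eq_trianglePineapple, coreIndex_trianglePineapple, hcardP]
  refine ⟨fun {V} _ G hV hG hE => ?_, hP⟩
  obtain rfl : Nat.card V = n := Nat.card_eq_fintype_card.trans hV
  rw [Nat.card_coe_set_eq] at hE
  refine ⟨hP ▸ coreIndex_le_of_connected hG hE, fun h => ?_, fun ⟨φ⟩ => coreIndex_congr φ⟩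
  obtain ⟨t, rfl⟩ := exists_eq_trianglePineapple_of_coreIndex_eq hG hE (h.trans hP)
  rw [pineapple_three_eq_trianglePineapple]
  exact nonempty_iso_trianglePineapple hcardP.symm t _
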